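/- arXiv:2409.12762 — 2 statements merged into one kernel-verified Lean document; each statement's English description precedes it below -/
import Mathlib

section
/- Let k > 0 and λ > 0 be real numbers, let d ∈ ℝ² be a unit vector and d⊥ = (−d₂, d₁) its rotation by π/2. Define w : ℝ² → ℝ by w(x) = (1/(k²λ²))·(2(x·d⊥)²/λ² − 1), the tapered wave u : ℝ² → ℂ by u(x) = exp(i·k·(x·d)·(1 + w(x))) · exp(−(x·d⊥)²/λ²), and F : ℝ² → ℂ by F(x) = u(x)·( −w(x)² − 16·(x·d)²·(x·d⊥)²/(k⁴λ⁸) + (4·i·k·(x·d)/(k⁴λ⁴))·(1 − 4·(x·d⊥)²/λ²) ). Then u satisfies the non-homogeneous Helmholtz equation Δu(x) + k²·u(x) = k²·F(x) for every x ∈ ℝ², where Δ denotes the Laplacian on ℝ². -/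
open scoped RealInnerProductSpace

/-- The Laplacian of a complex-valued function on the Euclidean plane `ℝ²`:
the sum of its second partial derivatives with respect to the standard orthonormal basis. -/
noncomputable def laplacian (v : EuclideanSpace ℝ (Fin 2) → ℂ)
    (x : EuclideanSpace ℝ (Fin 2)) : ℂ :=
  ∑ i : Fin 2, fderiv ℝ (fun y => fderiv ℝ v y (EuclideanSpace.single i (1 : ℝ))) x
    (EuclideanSpace.single i (1 : ℝ))

/-- The real inner product with `d`, as a complex-valued continuous linear map. -/
noncomputable def ipC (d : EuclideanSpace ℝ (Fin 2)) : EuclideanSpace ℝ (Fin 2) →L[ℝ] ℂ :=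
  Complex.ofRealCLM.comp (innerSL ℝ d)

lemma ipC_apply (d x : EuclideanSpace ℝ (Fin 2)) : ipC d x = ((⟪x, d⟫ : ℝ) : ℂ) := by
  simp [ipC, real_inner_comm]

lemma ipC_single (d : EuclideanSpace ℝ (Fin 2)) (i : Fin 2) :
    ipC d (EuclideanSpace.single i (1 : ℝ)) = (d i : ℂ) := by
  rw [ipC_apply, EuclideanSpace.inner_single_left]
  simp

lemma dir_second (S T : EuclideanSpace ℝ (Fin 2) →L[ℝ] ℂ) (K c m : ℂ)
    (u : EuclideanSpace ℝ (Fin 2) → ℂ)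
    (hu : ∀ x, u x = Complex.exp (K * S x * (1 + c * (2 * m * T x ^ 2 - 1)) - m * T x ^ 2))
    (x e : EuclideanSpace ℝ (Fin 2)) :
    fderiv ℝ (fun y => fderiv ℝ u y e) x e =
      u x * ((K * (1 + c * (2 * m * T x ^ 2 - 1)) * S e
          + (4 * K * c * m * S x * T x - 2 * m * T x) * T e) ^ 2
        + 8 * K * c * m * T x * T e * S e
        + (4 * K * c * m * S x - 2 * m) * T e ^ 2) := by
  have hS : ∀ y, HasFDerivAt (fun y => S y) S y := fun y => S.hasFDerivAt
  have hT : ∀ y, HasFDerivAt (fun y => T y) T y := fun y => T.hasFDerivAt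
  have hW : ∀ y, HasFDerivAt (fun y => 1 + c * (2 * m * T y ^ 2 - 1))
      ((4 * c * m * T y) • T) y := by
    intro y
    refine ((((((hT y).pow 2).const_mul (2 * m)).sub_const 1).const_mul c).const_add
      1).congr_fderiv ?_
    ext v
    simp
    ring
  have hu1 : ∀ y, HasFDerivAt u (u y • ((K * (1 + c * (2 * m * T y ^ 2 - 1))) • S
          + (4 * K * c * m * S y * T y - 2 * m * T y) • T)) y := by
    intro y
    have h := (((((hS y).const_mul K).mul (hW y)).sub (((hT y).pow 2).const_mul m))).cexp
    have h2 := h.congr_of_eventuallyEq (f₁ := u) (Filter.Eventually.of_forall hu)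
    refine h2.congr_fderiv ?_
    ext v
    simp [hu y]
    ring
  have h1 : (fun y => fderiv ℝ u y e) = fun y => u y * ((1 + c * (2 * m * T y ^ 2 - 1)) * (K * S e)
          + (S y * T y * (4 * K * c * m * T e) - T y * (2 * m * T e))) := by
    funext y
    rw [(hu1 y).fderiv]
    simp
    ring
  rw [h1]
  have h2 := (hu1 x).mul (((hW x).mul_const (K * S e)).add
    ((((hS x).mul (hT x)).mul_const (4 * K * c * m * T e)).sub ((hT x).mul_const (2 * m * T e))))
  refine (congrArg (fun L => L e) h2.fderiv).trans ?_
  simp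
  ring

/-- The Thorsos tapered wave `u` satisfies the non-homogeneous Helmholtz equation
`Δu + k²u = k²F` in `ℝ²`. -/
theorem tapered_wave_helmholtz
    (k lam : ℝ) (hk : 0 < k) (hlam : 0 < lam)
    (d dperp : EuclideanSpace ℝ (Fin 2)) (hd : ‖d‖ = 1)
    (hperp0 : dperp 0 = -(d 1)) (hperp1 : dperp 1 = d 0)
    (w : EuclideanSpace ℝ (Fin 2) → ℝ)
    (hw : ∀ x, w x = 1 / (k ^ 2 * lam ^ 2) * (2 * (⟪x, dperp⟫ : ℝ) ^ 2 / lam ^ 2 - 1))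
    (u F : EuclideanSpace ℝ (Fin 2) → ℂ)
    (hu : ∀ x, u x = Complex.exp (Complex.I * (k : ℂ) * ((⟪x, d⟫ : ℝ) : ℂ) * (1 + (w x : ℂ))) *
      Complex.exp (-((⟪x, dperp⟫ : ℝ) : ℂ) ^ 2 / (lam : ℂ) ^ 2))
    (hF : ∀ x, F x = u x * (-(w x : ℂ) ^ 2
      - 16 * ((⟪x, d⟫ : ℝ) : ℂ) ^ 2 * ((⟪x, dperp⟫ : ℝ) : ℂ) ^ 2 / ((k : ℂ) ^ 4 * (lam : ℂ) ^ 8)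
      + 4 * Complex.I * (k : ℂ) * ((⟪x, d⟫ : ℝ) : ℂ) / ((k : ℂ) ^ 4 * (lam : ℂ) ^ 4)
        * (1 - 4 * ((⟪x, dperp⟫ : ℝ) : ℂ) ^ 2 / (lam : ℂ) ^ 2))) :
    ∀ x, laplacian u x + (k : ℂ) ^ 2 * u x = (k : ℂ) ^ 2 * F x := by
  intro x
  have hk' : (k : ℂ) ≠ 0 := by exact_mod_cast hk.ne'
  have hl' : (lam : ℂ) ≠ 0 := by exact_mod_cast hlam.ne'
  have hn : (d 0 : ℂ) ^ 2 + (d 1 : ℂ) ^ 2 = 1 := by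
    have h := EuclideanSpace.real_norm_sq_eq d
    rw [hd, Fin.sum_univ_two] at h
    have h' : d 0 ^ 2 + d 1 ^ 2 = 1 := by linarith
    have h2 := congrArg Complex.ofReal h'
    simpa using h2
  have hu' : ∀ x, u x = Complex.exp (Complex.I * k * ipC d x *
      (1 + 1 / ((k : ℂ) ^ 2 * (lam : ℂ) ^ 2) * (2 * (1 / (lam : ℂ) ^ 2) * ipC dperp x ^ 2 - 1))
        - 1 / (lam : ℂ) ^ 2 * ipC dperp x ^ 2) := by
    intro x
    rw [hu, ← Complex.exp_add, hw, ipC_apply, ipC_apply]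
    congr 1
    push_cast
    ring
  have hS0 : ipC d (EuclideanSpace.single 0 (1 : ℝ)) = d 0 := ipC_single _ _
  have hS1 : ipC d (EuclideanSpace.single 1 (1 : ℝ)) = d 1 := ipC_single _ _
  have hT0 : ipC dperp (EuclideanSpace.single 0 (1 : ℝ)) = -d 1 := by rw [ipC_single, hperp0, Complex.ofReal_neg]
  have hT1 : ipC dperp (EuclideanSpace.single 1 (1 : ℝ)) = d 0 := by rw [ipC_single, hperp1]
  rw [laplacian, Fin.sum_univ_two, dir_second _ _ _ _ _ u hu', dir_second _ _ _ _ _ u hu',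
    hS0, hS1, hT0, hT1, hF, hw, ← ipC_apply, ipC_apply dperp]
  rw [← ipC_apply]
  push_cast
  rw [← ipC_apply]
  generalize ipC d x = s
  generalize ipC dperp x = t
  generalize u x = U
  generalize (d 0 : ℂ) = a at *
  generalize (d 1 : ℂ) = b at *
  generalize (k : ℂ) = K at *
  generalize (lam : ℂ) = L at *
  have key : ∀ A B C D : ℂ, U * ((A * a + B * -b) ^ 2 + C * -b * a + D * (-b) ^ 2)
      + U * ((A * b + B * a) ^ 2 + C * a * b + D * a ^ 2) = U * (A ^ 2 + B ^ 2 + D) := by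
    intro A B C D
    linear_combination U * (A ^ 2 + B ^ 2 + D) * hn
  rw [key]
  field_simp
  ring_nf
  simp only [Complex.I_sq]
  ring
end

section
/- Let k > 0 and λ > 0 be real numbers, let d ∈ ℝ² be a unit vector and d⊥ = (−d₂, d₁) its rotation by π/2. Define w : ℝ² → ℝ by w(x) = (1/(k²λ²))·(2(x·d⊥)²/λ² − 1) and the complex phase φ : ℝ² → ℂ by φ(x) = i·k·(x·d)·(1 + w(x)) − (x·d⊥)²/λ². Then for every x ∈ ℝ², writing D_v φ(x) for the directional derivative of φ at x in direction v, one has (D_d φ(x))² + (D_{d⊥} φ(x))² = −k²·(1 + w(x))² − 16·(x·d)²·(x·d⊥)²/(k²λ⁸) − 16·i·(x·d)·(x·d⊥)²/(k·λ⁶) + 4·(x·d⊥)²/λ⁴. -/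
open scoped RealInnerProductSpace

/-- The sum of squared directional derivatives of the complex phase
`φ(x) = ik(x·d)(1+w(x)) − (x·d⊥)²/λ²` of the Thorsos tapered wave, in the directions
`d` and `d⊥`, equals
`−k²(1+w)² − 16(x·d)²(x·d⊥)²/(k²λ⁸) − 16i(x·d)(x·d⊥)²/(kλ⁶) + 4(x·d⊥)²/λ⁴`. -/
theorem grad_phase_sq
    (k lam : ℝ) (hk : 0 < k) (hlam : 0 < lam)
    (d dperp : EuclideanSpace ℝ (Fin 2)) (hd : ‖d‖ = 1)
    (hperp0 : dperp 0 = -(d 1)) (hperp1 : dperp 1 = d 0)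
    (w : EuclideanSpace ℝ (Fin 2) → ℝ)
    (hw : ∀ x, w x = 1 / (k ^ 2 * lam ^ 2) * (2 * (⟪x, dperp⟫ : ℝ) ^ 2 / lam ^ 2 - 1))
    (φ : EuclideanSpace ℝ (Fin 2) → ℂ)
    (hφ : ∀ x, φ x = Complex.I * (k : ℂ) * ((⟪x, d⟫ : ℝ) : ℂ) * (1 + (w x : ℂ))
      - ((⟪x, dperp⟫ : ℝ) : ℂ) ^ 2 / (lam : ℂ) ^ 2) :
    ∀ x, (fderiv ℝ φ x d) ^ 2 + (fderiv ℝ φ x dperp) ^ 2 =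
      -(k : ℂ) ^ 2 * (1 + (w x : ℂ)) ^ 2
      - 16 * ((⟪x, d⟫ : ℝ) : ℂ) ^ 2 * ((⟪x, dperp⟫ : ℝ) : ℂ) ^ 2 / ((k : ℂ) ^ 2 * (lam : ℂ) ^ 8)
      - 16 * Complex.I * ((⟪x, d⟫ : ℝ) : ℂ) * ((⟪x, dperp⟫ : ℝ) : ℂ) ^ 2 / ((k : ℂ) * (lam : ℂ) ^ 6)
      + 4 * ((⟪x, dperp⟫ : ℝ) : ℂ) ^ 2 / (lam : ℂ) ^ 4 := by
  intro x
  have hk' : (k : ℂ) ≠ 0 := by exact_mod_cast hk.ne'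
  have hl' : (lam : ℂ) ≠ 0 := by exact_mod_cast hlam.ne'
  have hdd : (⟪d, d⟫ : ℝ) = 1 := by rw [real_inner_self_eq_norm_sq, hd]; norm_num
  have hdp : (⟪d, dperp⟫ : ℝ) = 0 := by
    simp [PiLp.inner_apply, Fin.sum_univ_two, hperp0, hperp1]; ring
  have hpd : (⟪dperp, d⟫ : ℝ) = 0 := by rw [real_inner_comm]; exact hdp
  have hpp : (⟪dperp, dperp⟫ : ℝ) = 1 := by
    rw [← hdd]
    simp only [PiLp.inner_apply, Fin.sum_univ_two, hperp0, hperp1]; simp; ring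
  have hL : ∀ e : EuclideanSpace ℝ (Fin 2), ∃ L : EuclideanSpace ℝ (Fin 2) →L[ℝ] ℂ,
      ∀ y, L y = ((⟪y, e⟫ : ℝ) : ℂ) := fun e =>
    ⟨Complex.ofRealCLM.comp (innerSL ℝ e), fun y => by simp [real_inner_comm]⟩
  obtain ⟨A, hA⟩ := hL d
  obtain ⟨B, hB⟩ := hL dperp
  have hφ' : φ = fun y => Complex.I * (k : ℂ) * (A y * (1 + 1 / ((k : ℂ) ^ 2 * (lam : ℂ) ^ 2) *
      (2 / (lam : ℂ) ^ 2 * (B y * B y) - 1))) - 1 / (lam : ℂ) ^ 2 * (B y * B y) := by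
    funext y
    rw [hφ, hw, hA, hB]
    push_cast
    ring
  have hBB := (B.hasFDerivAt (x := x)).mul (B.hasFDerivAt (x := x))
  have hD := (((A.hasFDerivAt (x := x)).mul (((((hBB.const_mul (2 / (lam : ℂ) ^ 2)).sub_const 1).const_mul
    (1 / ((k : ℂ) ^ 2 * (lam : ℂ) ^ 2))).const_add 1))).const_mul (Complex.I * (k : ℂ))).sub
    (hBB.const_mul (1 / (lam : ℂ) ^ 2))
  have hF := HasFDerivAt.fderiv hD
  have hder : ∀ v, fderiv ℝ φ x v = Complex.I * k * (A v * (1 + 1 / ((k : ℂ) ^ 2 * (lam : ℂ) ^ 2) *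
      (2 / (lam : ℂ) ^ 2 * (B x * B x) - 1)) + A x * (1 / ((k : ℂ) ^ 2 * (lam : ℂ) ^ 2) *
      (2 / (lam : ℂ) ^ 2 * (2 * B x * B v)))) - 1 / (lam : ℂ) ^ 2 * (2 * B x * B v) := by
    intro v
    rw [hφ']
    refine (congrArg (fun L : EuclideanSpace ℝ (Fin 2) →L[ℝ] ℂ => L v) hF).trans ?_
    simp only [sub_apply, add_apply, smul_apply, smul_eq_mul, Pi.mul_apply]
    ring
  have hAd : A d = 1 := by rw [hA, hdd]; simp
  have hAp : A dperp = 0 := by rw [hA, hpd]; simp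
  have hBd : B d = 0 := by rw [hB, hdp]; simp
  have hBp : B dperp = 1 := by rw [hB, hpp]; simp
  rw [hder, hder, hw, ← hA, ← hB]
  push_cast
  rw [← hB]
  simp only [hAd, hAp, hBd, hBp]
  generalize A x = a
  generalize B x = b
  have hI : Complex.I ^ 2 = -1 := Complex.I_sq
  generalize Complex.I = I at *
  field_simp
  ring_nf
  have hI3 : I ^ 3 = -I := by rw [pow_succ, hI]; ring
  simp only [hI, hI3]
  ring
end
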